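/- There exists a constant C < ∞ such that for all integers n ≥ 2, |Σ_{i=2}^n a(n,i)/h_{i−1} − (6/π²)·log n| ≤ C. -/

import Mathlib

open Real Filter Topology MeasureTheory

/-- The harmonic number `h n = ∑_{i=1}^n 1/i`, with `h 0 = 0`. -/
noncomputable def harmonic' (n : ℕ) : ℝ := ∑ i ∈ Finset.Icc 1 n, (1 : ℝ) / i

/-- One-step transition probabilities of the harmonic descent chain,
`p j i = 1/((j-i)·h_{j-1})` for `1 ≤ i < j`. -/
noncomputable def hdP (j i : ℕ) : ℝ := 1 / (((j : ℝ) - (i : ℝ)) * harmonic' (j - 1))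

/-- `b 1 = 1` and `b i = 6 h_{i-1} / (π² (i-1))` for `i ≥ 2`. -/
noncomputable def hdB (i : ℕ) : ℝ :=
  if i = 1 then 1 else 6 * harmonic' (i - 1) / (Real.pi ^ 2 * ((i : ℝ) - 1))

/-!
The chain holds in state `i` at rate `h_{i-1}`, so its generator is
`(L F)(i) = ∑_{l < i} (F l - F i) / (i - l)`. Dynkin's formula turns a two-sided bound on `L F` into
a two-sided bound on the mean absorption time `T`. The function `F i = h_{i-1}` has
`(L F)(i) = -∑_{k < i} 1/k²`, which gives `h_{n-1} ≤ (π²/6) T`. In the other direction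
the tail `∑_{k ≥ i} 1/k² ≤ 2/i` has to be absorbed, and `i ↦ 1/i` does so because
`(L (1/·))(i) = h_{i-1}/i ≥ 1/i`; adding the correction `-2/i` to `F` costs only a bounded amount.
-/

/-- The occupation measure, on the states between `s` and `n`, of a chain started at `n` that moves
strictly downwards with one-step transition probabilities `p j i` from `j` to `i`: `u i` is the
probability of ever visiting `i`. The chain is stopped on reaching `s`. -/
structure IsOccupationMeasure {α R : Type*} [Preorder α] [LocallyFiniteOrder α] [Semiring R]
    (p : α → α → R) (s n : α) (u : α → R) : Prop where
  start : u n = 1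
  step : ∀ i, s ≤ i → i < n → u i = ∑ j ∈ Finset.Ioc i n, u j * p j i

namespace IsOccupationMeasure

section Descending

variable {α R : Type*} [PartialOrder α] [LocallyFiniteOrder α] {s n : α} {u : α → R}
  {p : α → α → R}

lemma nonneg [Semiring R] [PartialOrder R] [IsOrderedRing R] (hu : IsOccupationMeasure p s n u)
    (hp : ∀ i j, s ≤ i → i < j → j ≤ n → 0 ≤ p j i) {i : α} (hsi : s ≤ i) (hin : i ≤ n) :
    0 ≤ u i := by
  induction hS : Finset.Ioc i n using Finset.strongInduction generalizing i with
  | H S ih =>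
    subst hS
    rcases hin.eq_or_lt with rfl | hlt
    · exact hu.start ▸ zero_le_one
    · rw [hu.step i hsi hlt]
      refine Finset.sum_nonneg fun j hj => ?_
      obtain ⟨hij, hjn⟩ := Finset.mem_Ioc.1 hj
      refine mul_nonneg (ih _ ?_ (hsi.trans hij.le) hjn rfl) (hp i j hsi hij hjn)
      exact (Finset.Ioc_subset_Ioc_left hij.le).ssubset_of_mem_notMem hj (by simp)

lemma sum_mul_sum_eq [Semiring R] (hu : IsOccupationMeasure p s n u) (F : α → R) :
    ∑ i ∈ Finset.Ioc s n, u i * ∑ l ∈ Finset.Ico s i, p i l * F l =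
      ∑ l ∈ Finset.Ico s n, u l * F l := by
  simp only [Finset.mul_sum]
  rw [Finset.sum_comm' (t' := Finset.Ico s n) (s' := fun l => Finset.Ioc l n)]
  · refine Finset.sum_congr rfl fun l hl => ?_
    obtain ⟨hsl, hln⟩ := Finset.mem_Ico.1 hl
    simp only [hu.step l hsl hln, Finset.sum_mul, mul_assoc]
  · intro i l
    simp only [Finset.mem_Ioc, Finset.mem_Ico]
    exact ⟨fun ⟨⟨_, hin⟩, hsl, hli⟩ => ⟨⟨hli, hin⟩, hsl, hli.trans_le hin⟩,
      fun ⟨⟨hli, hin⟩, hsl, _⟩ => ⟨⟨hsl.trans_lt hli, hin⟩, hsl, hli⟩⟩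

/-- Dynkin's formula for the discrete-time chain stopped at `s`. -/
lemma sum_mul_sum_sub [Ring R] (hu : IsOccupationMeasure p s n u) (hsn : s ≤ n) (F : α → R) :
    ∑ i ∈ Finset.Ioc s n, u i * (∑ l ∈ Finset.Ico s i, p i l * F l - F i) =
      u s * F s - F n := by
  have hends := (Finset.sum_Ico_add_eq_sum_Icc (f := fun i => u i * F i) hsn).trans
    (Finset.add_sum_Ioc_eq_sum_Icc hsn).symm
  rw [hu.start, one_mul] at hends
  simp only [mul_sub, Finset.sum_sub_distrib, hu.sum_mul_sum_eq]
  rw [sub_eq_sub_iff_add_eq_add, hends]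

lemma apply_absorbing_eq_one [Ring R] (hu : IsOccupationMeasure p s n u) (hsn : s ≤ n)
    (hp : ∀ i ∈ Finset.Ioc s n, ∑ l ∈ Finset.Ico s i, p i l = 1) : u s = 1 := by
  have h := hu.sum_mul_sum_sub hsn fun _ => 1
  rw [Finset.sum_eq_zero fun i hi => by simp [hp i hi]] at h
  simpa [sub_eq_zero] using h.symm

end Descending

end IsOccupationMeasure

lemma harmonic'_eq_harmonic (n : ℕ) : harmonic' n = harmonic n := by
  simp [harmonic', harmonic_eq_sum_Icc]

lemma harmonic'_eq_sub_one_add {n : ℕ} (hn : 1 ≤ n) :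
    harmonic' n = harmonic' (n - 1) + 1 / n := by
  obtain ⟨m, rfl⟩ := Nat.exists_eq_add_of_le' hn
  simp [harmonic'_eq_harmonic, harmonic_succ]

lemma harmonic'_sub_one (n : ℕ) : harmonic' (n - 1) = ∑ i ∈ Finset.Ico 1 n, (1 : ℝ) / i :=
  Finset.sum_congr (by ext; simp only [Finset.mem_Icc, Finset.mem_Ico]; omega) fun _ _ => rfl

lemma harmonic'_sub_one_eq_sum_sub (n : ℕ) :
    harmonic' (n - 1) = ∑ i ∈ Finset.Ico 1 n, 1 / ((n : ℝ) - i) := by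
  rw [harmonic'_sub_one]
  calc ∑ i ∈ Finset.Ico 1 n, (1 : ℝ) / i = ∑ i ∈ Finset.Ico 1 n, (1 : ℝ) / (n - i : ℕ) := by
        simpa using (Finset.sum_Ico_reflect (fun i : ℕ => (1 : ℝ) / i) 1 n.le_succ).symm
    _ = ∑ i ∈ Finset.Ico 1 n, 1 / ((n : ℝ) - i) :=
        Finset.sum_congr rfl fun i hi => by rw [Nat.cast_sub (Finset.mem_Ico.1 hi).2.le]

lemma harmonic'_nonneg (n : ℕ) : 0 ≤ harmonic' n :=
  Finset.sum_nonneg fun _ _ => by positivity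

lemma one_le_harmonic' {n : ℕ} (hn : 1 ≤ n) : 1 ≤ harmonic' n := by
  simpa [harmonic'] using Finset.single_le_sum (f := fun i : ℕ => (1 : ℝ) / i)
    (fun i _ => by positivity) (Finset.mem_Icc.2 ⟨le_rfl, hn⟩)

lemma log_le_harmonic'_sub_one {n : ℕ} (hn : 1 ≤ n) : log n ≤ harmonic' (n - 1) := by
  simpa [harmonic'_eq_harmonic, Nat.sub_add_cancel hn] using log_add_one_le_harmonic (n - 1)

lemma harmonic'_sub_one_le_one_add_log {n : ℕ} (hn : 1 ≤ n) :
    harmonic' (n - 1) ≤ 1 + log n := by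
  calc harmonic' (n - 1) ≤ harmonic' n := by
        rw [harmonic'_eq_sub_one_add hn]
        exact le_add_of_nonneg_right (by positivity)
    _ ≤ 1 + log n := by
        rw [harmonic'_eq_harmonic]
        exact harmonic_le_one_add_log n

lemma sum_Ico_one_div_sq_le (n : ℕ) :
    ∑ k ∈ Finset.Ico 1 n, 1 / (k : ℝ) ^ 2 ≤ π ^ 2 / 6 :=
  sum_le_hasSum _ (fun _ _ => by positivity) hasSum_zeta_two

lemma pi_sq_div_six_le_sum_Ico_add {n : ℕ} (hn : 1 ≤ n) :
    π ^ 2 / 6 ≤ ∑ k ∈ Finset.Ico 1 n, 1 / (k : ℝ) ^ 2 + 2 / n := by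
  refine le_of_tendsto hasSum_zeta_two.tendsto_sum_nat ?_
  filter_upwards [eventually_ge_atTop n] with N hN
  have htail : ∑ k ∈ Finset.Ico n N, 1 / (k : ℝ) ^ 2 ≤ 2 / (n : ℝ) := by
    obtain ⟨m, rfl⟩ := Nat.exists_eq_add_of_le' hn
    simpa [Finset.Ico_add_one_left_eq_Ioo] using sum_Ioo_inv_sq_le (α := ℝ) m N
  calc ∑ k ∈ Finset.range N, 1 / (k : ℝ) ^ 2 = ∑ k ∈ Finset.Ico 1 N, 1 / (k : ℝ) ^ 2 := by
        rw [Finset.range_eq_Ico, Finset.sum_eq_sum_Ico_succ_bot (by omega)]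
        simp
    _ = ∑ k ∈ Finset.Ico 1 n, 1 / (k : ℝ) ^ 2 + ∑ k ∈ Finset.Ico n N, 1 / (k : ℝ) ^ 2 :=
        (Finset.sum_Ico_consecutive _ hn hN).symm
    _ ≤ ∑ k ∈ Finset.Ico 1 n, 1 / (k : ℝ) ^ 2 + 2 / n := by gcongr

lemma hdP_nonneg {j i : ℕ} (hij : i ≤ j) : 0 ≤ hdP j i :=
  one_div_nonneg.2 <| mul_nonneg (sub_nonneg.2 <| Nat.cast_le.2 hij) (harmonic'_nonneg _)

lemma sum_hdP {j : ℕ} (hj : 2 ≤ j) : ∑ i ∈ Finset.Ico 1 j, hdP j i = 1 := by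
  have hne : harmonic' (j - 1) ≠ 0 := (zero_lt_one.trans_le (one_le_harmonic' (by omega))).ne'
  simp only [hdP, ← div_div]
  rw [← Finset.sum_div, ← harmonic'_sub_one_eq_sum_sub, div_self hne]

/-- The generator of the continuous-time harmonic descent chain, which jumps from `n` to `l < n` at
rate `1 / (n - l)` and is absorbed in state `1`. -/
noncomputable def hdGenerator (F : ℕ → ℝ) (n : ℕ) : ℝ :=
  ∑ l ∈ Finset.Ico 1 n, (F l - F n) / ((n : ℝ) - l)

lemma hdGenerator_sub_const_mul (F G : ℕ → ℝ) (c : ℝ) (n : ℕ) :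
    hdGenerator (fun i => F i - c * G i) n = hdGenerator F n - c * hdGenerator G n := by
  simp only [hdGenerator, Finset.mul_sum, ← Finset.sum_sub_distrib]
  exact Finset.sum_congr rfl fun l _ => by ring

lemma hdGenerator_div_harmonic' (F : ℕ → ℝ) {n : ℕ} (hn : 2 ≤ n) :
    hdGenerator F n / harmonic' (n - 1) = ∑ l ∈ Finset.Ico 1 n, hdP n l * F l - F n := by
  calc hdGenerator F n / harmonic' (n - 1)
      = ∑ l ∈ Finset.Ico 1 n, hdP n l * (F l - F n) := by
        rw [hdGenerator, Finset.sum_div]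
        refine Finset.sum_congr rfl fun l _ => ?_
        rw [hdP, div_div, one_div_mul_eq_div]
    _ = ∑ l ∈ Finset.Ico 1 n, hdP n l * F l - F n := by
        simp only [mul_sub, Finset.sum_sub_distrib, ← Finset.sum_mul, sum_hdP hn, one_mul]

lemma hdGenerator_one_div (n : ℕ) :
    hdGenerator (fun i => 1 / (i : ℝ)) n = harmonic' (n - 1) / n := by
  rw [hdGenerator, harmonic'_sub_one, Finset.sum_div]
  refine Finset.sum_congr rfl fun l hl => ?_
  obtain ⟨hl1, hln⟩ := Finset.mem_Ico.1 hl
  have hl0 : (l : ℝ) ≠ 0 := Nat.cast_ne_zero.2 (by omega)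
  have hn0 : (n : ℝ) ≠ 0 := Nat.cast_ne_zero.2 (by omega)
  have hsub : (n : ℝ) - l ≠ 0 := sub_ne_zero.2 (Nat.cast_lt.2 hln).ne'
  field_simp

/-- Shifting the state by one changes each increment `h_{l-1} - h_{n-1}` by `1/l - 1/n`, which
is an increment of `1/i`. -/
lemma hdGenerator_harmonic'_succ {n : ℕ} (hn : 1 ≤ n) :
    hdGenerator (fun i => harmonic' (i - 1)) (n + 1) =
      hdGenerator (fun i => harmonic' (i - 1)) n - 1 / (n : ℝ) ^ 2 := by
  have hshift : ∑ l ∈ Finset.Ico 2 (n + 1), (harmonic' (l - 1) - harmonic' n) / ((n + 1 : ℕ) - l) =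
      hdGenerator (fun i => harmonic' (i - 1)) n + hdGenerator (fun i => 1 / (i : ℝ)) n := by
    rw [← Finset.sum_Ico_add' _ 1 n 1, hdGenerator, hdGenerator, ← Finset.sum_add_distrib]
    refine Finset.sum_congr rfl fun l hl => ?_
    rw [Nat.add_sub_cancel, harmonic'_eq_sub_one_add (Finset.mem_Ico.1 hl).1,
      harmonic'_eq_sub_one_add hn]
    push_cast
    ring
  calc hdGenerator (fun i => harmonic' (i - 1)) (n + 1)
      = -(harmonic' n / n) + ∑ l ∈ Finset.Ico 2 (n + 1),
          (harmonic' (l - 1) - harmonic' n) / ((n + 1 : ℕ) - l) := by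
        rw [hdGenerator, Finset.sum_eq_sum_Ico_succ_bot (by omega)]
        simp [harmonic', neg_div]
    _ = hdGenerator (fun i => harmonic' (i - 1)) n - 1 / (n : ℝ) ^ 2 := by
        rw [hshift, hdGenerator_one_div, harmonic'_eq_sub_one_add hn]
        ring

lemma hdGenerator_harmonic' (n : ℕ) :
    hdGenerator (fun i => harmonic' (i - 1)) n = -∑ k ∈ Finset.Ico 1 n, 1 / (k : ℝ) ^ 2 := by
  rcases n.eq_zero_or_pos with rfl | hn
  · simp [hdGenerator]
  induction n, hn using Nat.le_induction with
  | base => simp [hdGenerator]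
  | succ n hn ih =>
    rw [hdGenerator_harmonic'_succ hn, ih, Finset.sum_Ico_succ_top hn]
    ring

lemma neg_pi_sq_div_six_le_hdGenerator_harmonic' (n : ℕ) :
    -(π ^ 2 / 6) ≤ hdGenerator (fun i => harmonic' (i - 1)) n := by
  rw [hdGenerator_harmonic']
  exact neg_le_neg (sum_Ico_one_div_sq_le n)

lemma hdGenerator_harmonic'_sub_two_div_le {n : ℕ} (hn : 2 ≤ n) :
    hdGenerator (fun i => harmonic' (i - 1) - 2 * (1 / (i : ℝ))) n ≤ -(π ^ 2 / 6) := by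
  have hinv : (2 : ℝ) / n ≤ 2 * (harmonic' (n - 1) / n) := by
    rw [← mul_div_assoc]
    gcongr
    linarith [one_le_harmonic' (n := n - 1) (by omega)]
  rw [hdGenerator_sub_const_mul, hdGenerator_harmonic', hdGenerator_one_div]
  linarith [pi_sq_div_six_le_sum_Ico_add (n := n) (by omega)]

namespace IsOccupationMeasure

variable {n : ℕ} {u : ℕ → ℝ}

/-- Dynkin's formula for the continuous-time chain stopped on absorption. -/
lemma sum_div_harmonic'_mul_hdGenerator (hu : IsOccupationMeasure hdP 1 n u) (hn : 1 ≤ n)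
    (F : ℕ → ℝ) :
    ∑ i ∈ Finset.Icc 2 n, u i / harmonic' (i - 1) * hdGenerator F i = F 1 - F n := by
  have h_one : u 1 = 1 := hu.apply_absorbing_eq_one hn fun i hi => sum_hdP (Finset.mem_Ioc.1 hi).1
  rw [← one_mul (F 1), ← h_one, ← hu.sum_mul_sum_sub hn F]
  refine Finset.sum_congr (Finset.Icc_add_one_left_eq_Ioc 1 n) fun i hi => ?_
  rw [← hdGenerator_div_harmonic' F (Finset.mem_Ioc.1 hi).1, div_mul_eq_mul_div, mul_div_assoc]

lemma div_harmonic'_nonneg (hu : IsOccupationMeasure hdP 1 n u) {i : ℕ}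
    (hi : i ∈ Finset.Icc 2 n) : 0 ≤ u i / harmonic' (i - 1) := by
  obtain ⟨h2i, hin⟩ := Finset.mem_Icc.1 hi
  exact div_nonneg (hu.nonneg (fun _ _ _ hij _ => hdP_nonneg hij.le) (by omega) hin)
    (harmonic'_nonneg _)

lemma sub_le_mul_sum_div_harmonic' (hu : IsOccupationMeasure hdP 1 n u) (hn : 1 ≤ n)
    {F : ℕ → ℝ} {c : ℝ} (hF : ∀ i ∈ Finset.Icc 2 n, -c ≤ hdGenerator F i) :
    F n - F 1 ≤ c * ∑ i ∈ Finset.Icc 2 n, u i / harmonic' (i - 1) := by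
  rw [← neg_sub, ← hu.sum_div_harmonic'_mul_hdGenerator hn F, neg_le, ← neg_mul, mul_comm,
    Finset.sum_mul]
  exact Finset.sum_le_sum fun i hi =>
    mul_le_mul_of_nonneg_left (hF i hi) (hu.div_harmonic'_nonneg hi)

lemma mul_sum_div_harmonic'_le_sub (hu : IsOccupationMeasure hdP 1 n u) (hn : 1 ≤ n)
    {F : ℕ → ℝ} {c : ℝ} (hF : ∀ i ∈ Finset.Icc 2 n, hdGenerator F i ≤ -c) :
    c * ∑ i ∈ Finset.Icc 2 n, u i / harmonic' (i - 1) ≤ F n - F 1 := by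
  rw [← neg_sub, ← hu.sum_div_harmonic'_mul_hdGenerator hn F, le_neg, ← neg_mul, mul_comm,
    Finset.sum_mul]
  exact Finset.sum_le_sum fun i hi =>
    mul_le_mul_of_nonneg_left (hF i hi) (hu.div_harmonic'_nonneg hi)

lemma harmonic'_le_pi_sq_div_six_mul_sum (hu : IsOccupationMeasure hdP 1 n u) (hn : 1 ≤ n) :
    harmonic' (n - 1) ≤ π ^ 2 / 6 * ∑ i ∈ Finset.Icc 2 n, u i / harmonic' (i - 1) := by
  simpa [harmonic'] using hu.sub_le_mul_sum_div_harmonic' hn fun i _ =>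
    neg_pi_sq_div_six_le_hdGenerator_harmonic' i

lemma pi_sq_div_six_mul_sum_le (hu : IsOccupationMeasure hdP 1 n u) (hn : 1 ≤ n) :
    π ^ 2 / 6 * ∑ i ∈ Finset.Icc 2 n, u i / harmonic' (i - 1) ≤ harmonic' (n - 1) + 2 := by
  have hle := hu.mul_sum_div_harmonic'_le_sub hn fun i hi =>
    hdGenerator_harmonic'_sub_two_div_le (Finset.mem_Icc.1 hi).1
  have hone : harmonic' (1 - 1) = 0 := by simp [harmonic']
  have hinv : 0 ≤ 1 / (n : ℝ) := by positivity
  rw [hone, Nat.cast_one] at hle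
  linarith

end IsOccupationMeasure

theorem hd_mean_absorption_time
    (a : ℕ → ℕ → ℝ)
    (ha_diag : ∀ n : ℕ, 1 ≤ n → a n n = 1)
    (ha_rec : ∀ n i : ℕ, 1 ≤ i → i < n →
      a n i = ∑ j ∈ Finset.Ioc i n, a n j * hdP j i) :
    ∃ C : ℝ, ∀ n : ℕ, 2 ≤ n →
      |∑ i ∈ Finset.Icc 2 n, a n i / harmonic' (i - 1)
        - 6 / Real.pi ^ 2 * Real.log n| ≤ C := by
  refine ⟨6 / π ^ 2 * 3, fun n hn => ?_⟩
  have hn1 : 1 ≤ n := by omega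
  have hocc : IsOccupationMeasure hdP 1 n (a n) := ⟨ha_diag n hn1, ha_rec n⟩
  have hlower := hocc.harmonic'_le_pi_sq_div_six_mul_sum hn1
  have hupper := hocc.pi_sq_div_six_mul_sum_le hn1
  set T := ∑ i ∈ Finset.Icc 2 n, a n i / harmonic' (i - 1)
  have hlog : |π ^ 2 / 6 * T - log n| ≤ 3 :=
    abs_le.2 ⟨by linarith [log_le_harmonic'_sub_one hn1],
      by linarith [harmonic'_sub_one_le_one_add_log hn1]⟩
  calc |T - 6 / π ^ 2 * log n| = |6 / π ^ 2 * (π ^ 2 / 6 * T - log n)| := by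
        congr 1
        field_simp
    _ = 6 / π ^ 2 * |π ^ 2 / 6 * T - log n| := by rw [abs_mul, abs_of_nonneg (by positivity)]
    _ ≤ 6 / π ^ 2 * 3 := by gcongr
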